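/- If a configuration (v̄, E₁⟨E₂⟨x⟩[x←A]⟩)_ctxt of the call-by-need Storeless Abstract Machine is reachable from an initial configuration and x ∉ FV_∅(E₂) (so that rule (6) applies), then the variable x does not occur in the multiset of free variables of the plugging E₁⟨A⟨E₂⟨v̄⟩⟩⟩, i.e., FV(E₁⟨A⟨E₂⟨v̄⟩⟩⟩)(x) = 0. -/

import Mathlib

/-!
The garbage-collection rule (6) preserves closedness of the term represented by a configuration,
so nothing at all is free in `E₁⟨A⟨E₂⟨v⟩⟩⟩`, in particular not `x`.

The plugging `E⟨t⟩` of every reachable configuration `(t, E)` is closed (`Exec.closed`): rules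
(1)-(3) do not change it, and the other three can only shrink its set of free variables. A capture
of variables is harmless here, since it can only remove free variables.
Everything is computed with `FV_M(E)`: plugging is functional composition (`ECtx.fv_plug`,
`ECtx.fv_plugC`), and as a set `FV_M(E)` is monotone and additive in `M` and contained in
`FV_∅(E) ∪ M`. For rules (5) and (6), a variable of `A⟨E₂⟨v⟩⟩` comes from `A`, from `FV_∅(E₂)`, or
from `A⟨v⟩`, all of which are already visible in `E₂⟨x⟩[x←A⟨v⟩]`, except for `x ∈ FV_∅(E₂)`, which
rule (5) binds again and rule (6) excludes. Rule (5) also needs that α-equivalent terms have the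
same free variables, which is read off from their common de Bruijn skeleton (`Term.mem_fv_toDB`).
-/

namespace SAM

/-- Terms of the λ-calculus with explicit substitutions:
`t ::= x | λx.t | t t | t[x←t]` (`esub t x u` denotes `t[x←u]`). -/
inductive Term : Type
  | var : ℕ → Term
  | lam : ℕ → Term → Term
  | app : Term → Term → Term
  | esub : Term → ℕ → Term → Term
  deriving DecidableEq

namespace Term

/-- Pure terms contain no explicit substitutions. -/
def Pure : Term → Prop
  | var _ => True
  | lam _ t => t.Pure
  | app t u => t.Pure ∧ u.Pure
  | esub _ _ _ => False

/-- Pure values are abstractions of pure terms. -/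
def IsPureValue : Term → Prop
  | lam _ t => t.Pure
  | _ => False

/-- The multiset of free variables of a term. -/
def fv : Term → Multiset ℕ
  | var x => {x}
  | lam x t => t.fv.filter (· ≠ x)
  | app t u => t.fv + u.fv
  | esub t x u => t.fv.filter (· ≠ x) + u.fv

/-- The size of a term. -/
def size : Term → ℕ
  | var _ => 1
  | lam _ t => t.size + 1
  | app t u => t.size + u.size + 1
  | esub t _ u => t.size + u.size + 1

/-- The multiset of variables bound (by λ or by an explicit substitution) in a term. -/
def binders : Term → Multiset ℕ
  | var _ => 0
  | lam x t => x ::ₘ t.binders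
  | app t u => t.binders + u.binders
  | esub t x u => x ::ₘ (t.binders + u.binders)

/-- The multiset of all variables occurring (free, bound or binding) in a term. -/
def vars : Term → Multiset ℕ
  | var x => {x}
  | lam x t => x ::ₘ t.vars
  | app t u => t.vars + u.vars
  | esub t x u => x ::ₘ (t.vars + u.vars)

/-- The number of explicit-substitution constructors occurring in a term. -/
def esubCount : Term → ℕ
  | var _ => 0
  | lam _ t => t.esubCount
  | app t u => t.esubCount + u.esubCount
  | esub t _ u => t.esubCount + u.esubCount + 1

/-- A term is closed if it has no free variables. -/
def Closed (t : Term) : Prop := t.fv = 0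

/-- A term is well-named if each variable is bound at most once in it and
no bound variable of it occurs among its free variables. -/
def WellNamed (t : Term) : Prop :=
  t.binders.Nodup ∧ ∀ x ∈ t.binders, x ∉ t.fv

/-- de Bruijn skeletons, used to define α-equivalence. -/
inductive DB : Type
  | bvar : ℕ → DB
  | fvar : ℕ → DB
  | lam : DB → DB
  | app : DB → DB → DB
  | esub : DB → DB → DB
  deriving DecidableEq

/-- Index of a variable in a list of binders. -/
def dbIndex (x : ℕ) : List ℕ → Option ℕ
  | [] => none
  | y :: Γ => if x = y then some 0 else (dbIndex x Γ).map (· + 1)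

/-- Conversion to de Bruijn skeleton, relative to a list of enclosing binders. -/
def toDB : Term → List ℕ → DB
  | var x, Γ =>
      match dbIndex x Γ with
      | some n => DB.bvar n
      | none => DB.fvar x
  | lam x t, Γ => DB.lam (t.toDB (x :: Γ))
  | app t u, Γ => DB.app (t.toDB Γ) (u.toDB Γ)
  | esub t x u, Γ => DB.esub (t.toDB (x :: Γ)) (u.toDB Γ)

/-- α-equivalence of terms. -/
def AlphaEq (t u : Term) : Prop := t.toDB [] = u.toDB []

/-- The (reflexive) sub-term relation. -/
inductive Subterm : Term → Term → Prop
  | refl (t) : Subterm t t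
  | lam {s t} (x) : Subterm s t → Subterm s (Term.lam x t)
  | appL {s t} (u) : Subterm s t → Subterm s (Term.app t u)
  | appR (t) {s u} : Subterm s u → Subterm s (Term.app t u)
  | esubL {s t} (x) (u) : Subterm s t → Subterm s (Term.esub t x u)
  | esubR (t) (x) {s u} : Subterm s u → Subterm s (Term.esub t x u)

/-- `s` is a sub-term of `t` up to α-equivalence. -/
def SubtermUpToAlpha (s t : Term) : Prop := ∃ s', Subterm s' t ∧ AlphaEq s s'

/-- `v'` is a copy of `v` whose bound variables are renamed to distinct
fresh variables, avoiding the variables in `avoid`. -/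
def IsFreshCopy (v v' : Term) (avoid : Multiset ℕ) : Prop :=
  AlphaEq v v' ∧ v'.Pure ∧ v'.binders.Nodup ∧ ∀ x ∈ v'.binders, x ∉ avoid

end Term

/-- Evaluation contexts:
`E ::= ⟨·⟩ | E t̄ | E[x←t̄] | E'⟨x⟩[x←E]`
(`sub2 E' x E` denotes `E'⟨x⟩[x←E]`; purity of the side terms is
imposed by the well-formedness predicate `ECtx.WF`). -/
inductive ECtx : Type
  | hole : ECtx
  | app : ECtx → Term → ECtx
  | esub : ECtx → ℕ → Term → ECtx
  | sub2 : ECtx → ℕ → ECtx → ECtx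
  deriving DecidableEq

namespace ECtx

/-- Well-formedness: all side terms in an evaluation context are pure,
as required by the grammar. -/
def WF : ECtx → Prop
  | hole => True
  | app E t => E.WF ∧ t.Pure
  | esub E _ t => E.WF ∧ t.Pure
  | sub2 E' _ E => E'.WF ∧ E.WF

/-- Substitution contexts `A ::= ⟨·⟩ | A[x←t̄]`. -/
inductive IsSubst : ECtx → Prop
  | hole : IsSubst ECtx.hole
  | esub {A : ECtx} (x : ℕ) {t : Term} :
      t.Pure → IsSubst A → IsSubst (ECtx.esub A x t)

/-- Plugging a term into the hole of an evaluation context. -/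
def plug : ECtx → Term → Term
  | hole, t => t
  | app E u, t => Term.app (E.plug t) u
  | esub E x u, t => Term.esub (E.plug t) x u
  | sub2 E' x E, t => Term.esub (E'.plug (Term.var x)) x (E.plug t)

/-- Plugging an evaluation context into the hole of an evaluation context. -/
def plugC : ECtx → ECtx → ECtx
  | hole, F => F
  | app E u, F => app (E.plugC F) u
  | esub E x u, F => esub (E.plugC F) x u
  | sub2 E' x E, F => sub2 E' x (E.plugC F)

/-- The multiset `FV_M(E)` of free variables of an evaluation context,
relative to a multiset `M` for the hole. -/
def fv : ECtx → Multiset ℕ → Multiset ℕ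
  | hole, M => M
  | app E t, M => E.fv M + t.fv
  | esub E x t, M => (E.fv M).filter (· ≠ x) + t.fv
  | sub2 E' x E, M => (E'.fv {x}).filter (· ≠ x) + E.fv M

end ECtx

/-- Configurations are tagged `term` or `ctxt`. -/
inductive Tag : Type
  | term | ctxt
  deriving DecidableEq

/-- A configuration of the SAM: a (pure) term, an evaluation context, and a tag. -/
structure Config : Type where
  t : Term
  E : ECtx
  tag : Tag
  deriving DecidableEq

/-- The six rules of the SAM. -/
inductive Rule : Type
  | r1 | r2 | r3 | r4 | r5 | r6
  deriving DecidableEq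

/-- Labels of SAM transitions. -/
inductive Label : Type
  | b | s | o
  deriving DecidableEq

/-- The label of each rule: rules (1)–(3) are overhead, rule (4) is beta,
rules (5)–(6) are substitution. -/
def Rule.label : Rule → Label
  | .r1 => .o
  | .r2 => .o
  | .r3 => .o
  | .r4 => .b
  | .r5 => .s
  | .r6 => .s

/-- The labelled transition system of the call-by-need Storeless Abstract Machine. -/
inductive Step : Config → Rule → Config → Prop
  /-- (1) (t̄ū, E)_term →_o (t̄, E⟨⟨·⟩ū⟩)_term -/
  | r1 {t u : Term} {E : ECtx} :
      t.Pure → u.Pure → E.WF →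
      Step ⟨Term.app t u, E, Tag.term⟩ Rule.r1
           ⟨t, E.plugC (ECtx.app ECtx.hole u), Tag.term⟩
  /-- (2) (x, E₁⟨E₂[x←t̄]⟩)_term →_o (t̄, E₁⟨E₂⟨x⟩[x←⟨·⟩]⟩)_term -/
  | r2 {x : ℕ} {t : Term} {E₁ E₂ : ECtx} :
      t.Pure → E₁.WF → E₂.WF →
      Step ⟨Term.var x, E₁.plugC (ECtx.esub E₂ x t), Tag.term⟩ Rule.r2
           ⟨t, E₁.plugC (ECtx.sub2 E₂ x ECtx.hole), Tag.term⟩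
  /-- (3) (v̄, E)_term →_o (v̄, E)_ctxt -/
  | r3 {v : Term} {E : ECtx} :
      v.IsPureValue → E.WF →
      Step ⟨v, E, Tag.term⟩ Rule.r3 ⟨v, E, Tag.ctxt⟩
  /-- (4) (λx.t̄, E⟨A⟨·⟩ū⟩)_ctxt →_b (t̄, E⟨A⟨⟨·⟩[x←ū]⟩⟩)_term -/
  | r4 {x : ℕ} {t u : Term} {E A : ECtx} :
      t.Pure → u.Pure → E.WF → A.IsSubst →
      Step ⟨Term.lam x t, E.plugC (ECtx.app A u), Tag.ctxt⟩ Rule.r4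
           ⟨t, E.plugC (A.plugC (ECtx.esub ECtx.hole x u)), Tag.term⟩
  /-- (5) (v̄, E₁⟨E₂⟨x⟩[x←A]⟩)_ctxt →_s (v̄^≈, E₁⟨A⟨E₂[x←v̄]⟩⟩)_ctxt, if x ∈ FV_∅(E₂),
  where v̄^≈ is a fresh copy of v̄ avoiding all variables of the configuration. -/
  | r5 {x : ℕ} {v v' : Term} {E₁ E₂ A : ECtx} :
      v.IsPureValue → E₁.WF → E₂.WF → A.IsSubst →
      x ∈ E₂.fv 0 →
      v.IsFreshCopy v' ((E₁.plugC (ECtx.sub2 E₂ x A)).plug v).vars →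
      Step ⟨v, E₁.plugC (ECtx.sub2 E₂ x A), Tag.ctxt⟩ Rule.r5
           ⟨v', E₁.plugC (A.plugC (ECtx.esub E₂ x v)), Tag.ctxt⟩
  /-- (6) (v̄, E₁⟨E₂⟨x⟩[x←A]⟩)_ctxt →_s (v̄, E₁⟨A⟨E₂⟩⟩)_ctxt, if x ∉ FV_∅(E₂). -/
  | r6 {x : ℕ} {v : Term} {E₁ E₂ A : ECtx} :
      v.IsPureValue → E₁.WF → E₂.WF → A.IsSubst →
      x ∉ E₂.fv 0 →
      Step ⟨v, E₁.plugC (ECtx.sub2 E₂ x A), Tag.ctxt⟩ Rule.r6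
           ⟨v, E₁.plugC (A.plugC E₂), Tag.ctxt⟩

/-- A finite execution: a sequence of SAM transitions, recorded by its trace of rules. -/
inductive Exec : Config → List Rule → Config → Prop
  | nil (c : Config) : Exec c [] c
  | cons {c c' c'' : Config} {r : Rule} {rs : List Rule} :
      Step c r c' → Exec c' rs c'' → Exec c (r :: rs) c''

/-- `|e|_ℓ`: the number of transitions labelled `ℓ` occurring in an execution trace. -/
def labelCount (e : List Rule) (ℓ : Label) : ℕ := (e.map Rule.label).count ℓ

/-- A term may serve as the initial term of an initial configuration:
it is pure, closed and well-named. -/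
def InitialTerm (t : Term) : Prop := t.Pure ∧ t.Closed ∧ t.WellNamed

/-- A configuration is reachable if some execution from an initial configuration ends at it. -/
def Reachable (c : Config) : Prop :=
  ∃ (t₀ : Term) (e : List Rule),
    InitialTerm t₀ ∧ Exec ⟨t₀, ECtx.hole, Tag.term⟩ e c

/-- The number of maximal subsequences of consecutive transitions consisting
solely of instances of rule (1) in a trace (each such run is counted at its
last element). -/
def countR1Runs : List Rule → ℕ
  | [] => 0
  | [r] => if r = Rule.r1 then 1 else 0
  | r :: r' :: rs =>
      (if r = Rule.r1 ∧ r' ≠ Rule.r1 then 1 else 0) + countR1Runs (r' :: rs)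


namespace Term

/-- The set of named variables in a de Bruijn skeleton. -/
def DB.fv : DB → Set ℕ
  | DB.bvar _ => ∅
  | DB.fvar x => {x}
  | DB.lam t => t.fv
  | DB.app t u => t.fv ∪ u.fv
  | DB.esub t u => t.fv ∪ u.fv

lemma dbIndex_eq_none (x : ℕ) (Γ : List ℕ) : dbIndex x Γ = none ↔ x ∉ Γ := by
  induction Γ with
  | nil => simp [dbIndex]
  | cons y Γ ih =>
    by_cases h : x = y
    · simp [dbIndex, h]
    · simp [dbIndex, h, ih]

lemma mem_fv_toDB (t : Term) (y : ℕ) (Γ : List ℕ) :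
    y ∈ (t.toDB Γ).fv ↔ y ∈ t.fv ∧ y ∉ Γ := by
  induction t generalizing Γ with
  | var x =>
    have h := dbIndex_eq_none x Γ
    cases hi : dbIndex x Γ with
    | none =>
      simp only [toDB, hi, DB.fv, Term.fv, Set.mem_singleton_iff, Multiset.mem_singleton]
      have := h.1 hi
      grind
    | some n =>
      have hx : x ∈ Γ := by
        by_contra hx
        simp [h.2 hx] at hi
      simp only [toDB, hi, DB.fv, Term.fv, Set.mem_empty_iff_false, Multiset.mem_singleton]
      grind
  | lam x t ih => simp [toDB, DB.fv, Term.fv, ih, and_assoc]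
  | app t u iht ihu => simp [toDB, DB.fv, Term.fv, iht, ihu, or_and_right]
  | esub t x u iht ihu => simp [toDB, DB.fv, Term.fv, iht, ihu, or_and_right, and_assoc]

lemma AlphaEq.mem_fv {t u : Term} (h : AlphaEq t u) (y : ℕ) : y ∈ t.fv ↔ y ∈ u.fv := by
  have ht := mem_fv_toDB t y []
  have hu := mem_fv_toDB u y []
  rw [AlphaEq] at h
  rw [h] at ht
  simpa using ht.symm.trans hu

end Term

namespace ECtx

lemma fv_plug (E : ECtx) (t : Term) : (E.plug t).fv = E.fv t.fv := by
  induction E generalizing t with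
  | hole => rfl
  | app E u ih => simp [plug, fv, Term.fv, ih]
  | esub E x u ih => simp [plug, fv, Term.fv, ih]
  | sub2 E' x E ih' ih => simp [plug, fv, Term.fv, ih, ih']

lemma fv_plugC (E F : ECtx) (M : Multiset ℕ) : (E.plugC F).fv M = E.fv (F.fv M) := by
  induction E with
  | hole => rfl
  | app E u ih => simp [plugC, fv, ih]
  | esub E x u ih => simp [plugC, fv, ih]
  | sub2 E' x E ih' ih => simp [plugC, fv, ih]

lemma fv_mono (E : ECtx) {M N : Multiset ℕ} (h : M ⊆ N) : E.fv M ⊆ E.fv N := by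
  induction E with
  | hole => exact h
  | app E u ih => intro y; have := @ih y; simp only [fv, Multiset.mem_add]; tauto
  | esub E x u ih =>
    intro y; have := @ih y; simp only [fv, Multiset.mem_add, Multiset.mem_filter]; tauto
  | sub2 E' x E ih' ih => intro y; have := @ih y; simp only [fv, Multiset.mem_add]; tauto

/-- As a set, `FV_M(E)` is additive in `M`: whether `E` binds a variable of the hole does not depend
on what else fills the hole. -/
lemma mem_fv_of_forall (E : ECtx) {M N P : Multiset ℕ} {y : ℕ}
    (h : ∀ z ∈ M, z ∈ N ∨ z ∈ P) (hy : y ∈ E.fv M) : y ∈ E.fv N ∨ y ∈ E.fv P := by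
  induction E with
  | hole => exact h y hy
  | app E u ih => simp only [fv, Multiset.mem_add] at hy ⊢; tauto
  | esub E x u ih => simp only [fv, Multiset.mem_add, Multiset.mem_filter] at hy ⊢; tauto
  | sub2 E' x E ih' ih => simp only [fv, Multiset.mem_add] at hy ⊢; tauto

lemma mem_fv_zero_or (E : ECtx) {M : Multiset ℕ} {y : ℕ} (hy : y ∈ E.fv M) :
    y ∈ E.fv 0 ∨ y ∈ M := by
  induction E with
  | hole => exact Or.inr hy
  | app E u ih => simp only [fv, Multiset.mem_add] at hy ⊢; tauto
  | esub E x u ih => simp only [fv, Multiset.mem_add, Multiset.mem_filter] at hy ⊢; tauto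
  | sub2 E' x E ih' ih => simp only [fv, Multiset.mem_add] at hy ⊢; tauto

lemma fv_zero_subset (E : ECtx) (M : Multiset ℕ) : E.fv 0 ⊆ E.fv M :=
  E.fv_mono (Multiset.zero_subset M)

/-- Scope extrusion: moving `A` out of `E₂⟨x⟩[x←A⟨V⟩]` creates no free variable, provided the new
content `M` of `A` only has variables of `V` and variables of `FV_∅(E₂)` other than `x`. -/
lemma fv_extrude {E₂ A : ECtx} {x : ℕ} {M V : Multiset ℕ}
    (h : ∀ z ∈ M, (z ∈ E₂.fv 0 ∧ z ≠ x) ∨ z ∈ V) : A.fv M ⊆ (sub2 E₂ x A).fv V := by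
  intro y hy
  have h' : ∀ z ∈ M, z ∈ (E₂.fv 0).filter (· ≠ x) ∨ z ∈ V := by
    simpa only [Multiset.mem_filter] using h
  simp only [fv, Multiset.mem_add, Multiset.mem_filter]
  rcases A.mem_fv_of_forall h' hy with hy | hy
  · rcases A.mem_fv_zero_or hy with hy | hy
    · exact Or.inr (A.fv_zero_subset V hy)
    · rw [Multiset.mem_filter] at hy
      exact Or.inl ⟨E₂.fv_zero_subset _ hy.1, hy.2⟩
  · exact Or.inr hy

lemma gc_fv_subset {E₁ E₂ A : ECtx} {x : ℕ} (v : Term) (hx : x ∉ E₂.fv 0) :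
    ((E₁.plugC (A.plugC E₂)).plug v).fv ⊆ ((E₁.plugC (sub2 E₂ x A)).plug v).fv := by
  simp only [fv_plug, fv_plugC]
  refine E₁.fv_mono (fv_extrude fun z hz => ?_)
  rcases E₂.mem_fv_zero_or hz with hz | hz
  · exact Or.inl ⟨hz, fun h => hx (h ▸ hz)⟩
  · exact Or.inr hz

end ECtx

lemma Step.fv_subset {c c' : Config} {r : Rule} (h : Step c r c') :
    (c'.E.plug c'.t).fv ⊆ (c.E.plug c.t).fv := by
  cases h with
  | r1 => simp [ECtx.fv_plug, ECtx.fv_plugC, ECtx.fv, Term.fv]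
  | r2 => simp [ECtx.fv_plug, ECtx.fv_plugC, ECtx.fv, Term.fv]
  | r3 => simp
  | @r4 x t u E A =>
    simp only [ECtx.fv_plug, ECtx.fv_plugC, ECtx.fv, Term.fv]
    refine E.fv_mono fun y hy => ?_
    rw [Multiset.mem_add]
    rcases A.mem_fv_of_forall (fun z hz => Multiset.mem_add.1 hz) hy with hy | hy
    · exact Or.inl hy
    · exact (A.mem_fv_zero_or hy).imp (fun hy => A.fv_zero_subset _ hy) id
  | @r5 x v v' E₁ E₂ A _ _ _ _ _ hcopy =>
    simp only [ECtx.fv_plug, ECtx.fv_plugC]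
    refine E₁.fv_mono (ECtx.fv_extrude fun z hz => ?_)
    simp only [ECtx.fv, Multiset.mem_add, Multiset.mem_filter] at hz
    rcases hz with ⟨hz, hzx⟩ | hz
    · rcases E₂.mem_fv_zero_or hz with hz | hz
      · exact Or.inl ⟨hz, hzx⟩
      · exact Or.inr ((hcopy.1.mem_fv z).2 hz)
    · exact Or.inr hz
  | r6 _ _ _ _ hx => exact ECtx.gc_fv_subset _ hx

lemma Exec.closed {c c' : Config} {e : List Rule} (h : Exec c e c')
    (hc : (c.E.plug c.t).Closed) : (c'.E.plug c'.t).Closed := by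
  induction h with
  | nil => exact hc
  | cons hs _ ih => exact ih (Multiset.subset_zero.1 (hc ▸ hs.fv_subset))

/-- If a configuration `(v̄, E₁⟨E₂⟨x⟩[x←A]⟩)_ctxt` is reachable
from an initial configuration and `x ∉ FV_∅(E₂)`, then `x` does not occur in
the multiset of free variables of the plugging `E₁⟨A⟨E₂⟨v̄⟩⟩⟩`. -/
theorem rule6_gc_no_occurrence
    (v : Term) (x : ℕ) (E₁ E₂ A : ECtx)
    (hv : v.IsPureValue) (hA : A.IsSubst)
    (hreach : Reachable ⟨v, E₁.plugC (ECtx.sub2 E₂ x A), Tag.ctxt⟩)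
    (hx : x ∉ E₂.fv 0) :
    Multiset.count x ((E₁.plugC (A.plugC E₂)).plug v).fv = 0 := by
  obtain ⟨t₀, e, ⟨-, hclosed, -⟩, hexec⟩ := hreach
  have hc : ((E₁.plugC (ECtx.sub2 E₂ x A)).plug v).fv = 0 := hexec.closed hclosed
  refine Multiset.count_eq_zero.2 fun hmem => ?_
  have := ECtx.gc_fv_subset v hx hmem
  simp [hc] at this

end SAM
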